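/- arXiv:2401.07433 — 4 statements merged into one kernel-verified Lean document; each statement's English description precedes it below -/
import Mathlib

section
/- Assume F has characteristic 2. Suppose u ∈ F^{2^k} satisfies u(0) = 0 (an M-SPC node: only position 0 is frozen, all other positions arbitrary), and let c be the associated codeword. Then ∑_{j=0}^{2^k−1} g0inv^{(k)}(j)·c(j) = 0; that is, the entries of the vector diag(g0inv^{(k)})·c satisfy a single parity-check equation. (Paper's Theorem 1.) -/
open Finset

variable {F : Type*}

/-- Kronecker power of a 2×2 matrix, defined by the binary-digit product formula:
the `(i,j)` entry of `kron M k` is `∏ t < k, M i_t j_t` where `i_t, j_t` are the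
`t`-th binary digits of `i` and `j`. -/
noncomputable def kron [Field F] (M : Matrix (Fin 2) (Fin 2) F) (k : ℕ) :
    Matrix (Fin (2 ^ k)) (Fin (2 ^ k)) F :=
  fun i j => ∏ t ∈ Finset.range k,
    M (if (i : ℕ).testBit t then 1 else 0) (if (j : ℕ).testBit t then 1 else 0)

/-- The 2×2 non-binary polar kernel with rows (μ, 0) and (γ, δ). -/
noncomputable def G2 [Field F] (μ γ δ : F) : Matrix (Fin 2) (Fin 2) F := !![μ, 0; γ, δ]

/-- `Gk μ γ δ k = G2^{⊗k}`, the k-fold Kronecker power of the kernel. -/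
noncomputable def Gk [Field F] (μ γ δ : F) (k : ℕ) : Matrix (Fin (2 ^ k)) (Fin (2 ^ k)) F :=
  kron (G2 μ γ δ) k

/-- `g0inv μ γ δ k` : first column of the inverse of `G2^{⊗k}`. -/
noncomputable def g0inv [Field F] (μ γ δ : F) (k : ℕ) (j : Fin (2 ^ k)) : F :=
  (Gk μ γ δ k)⁻¹ j ⟨0, Nat.two_pow_pos k⟩

/-- `rk μ γ δ k` : last row of `G2^{⊗k}`. -/
noncomputable def rk [Field F] (μ γ δ : F) (k : ℕ) (j : Fin (2 ^ k)) : F :=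
  Gk μ γ δ k ⟨2 ^ k - 1, by have := Nat.two_pow_pos k; omega⟩ j

/-- codeword associated to an input vector `u`: `cᵀ = uᵀ · G2^{⊗k}`. -/
noncomputable def codeword [Field F] (μ γ δ : F) (k : ℕ) (u : Fin (2 ^ k) → F)
    (j : Fin (2 ^ k)) : F :=
  ∑ i, u i * Gk μ γ δ k i j

theorem index_lt {p q n a b : ℕ} (ha : a < q) (hb : b < p) (h : p * q = n) :
    p * a + b < n := by
  subst h
  have h1 : p * a + b < p * (a + 1) := by
    have hm : p * (a + 1) = p * a + p := by ring
    omega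
  have h2 : p * (a + 1) ≤ p * q := Nat.mul_le_mul le_rfl ha
  omega

/-!
The Kronecker power `G` of the kernel is lower triangular, because `j ≤ i` whenever every binary
digit of `j` is at most the corresponding digit of `i`; its diagonal entries are products of `μ`s
and `δ`s. Hence `G` is invertible, and pairing `c = u ᵥ* G` with column `0` of `G⁻¹` recovers `u 0`.
-/

open Matrix

theorem vecMul_dotProduct_inv_col {R n : Type*} [CommRing R] [Fintype n] [DecidableEq n]
    {A : Matrix n n R} (hA : IsUnit A.det) (u : n → R) (i : n) :
    (u ᵥ* A) ⬝ᵥ A⁻¹.col i = u i :=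
  calc (u ᵥ* A) ⬝ᵥ A⁻¹.col i = (u ᵥ* A ᵥ* A⁻¹) i := rfl
    _ = u i := by rw [vecMul_vecMul, mul_nonsing_inv A hA, vecMul_one]

section Kron

variable [Field F] {M : Matrix (Fin 2) (Fin 2) F}

theorem isLowerTriangular_kron (hM : M 0 1 = 0) (k : ℕ) : (kron M k).IsLowerTriangular := by
  intro i j hij
  obtain ⟨t, htj, hti⟩ : ∃ t, (j : ℕ).testBit t = true ∧ ¬(i : ℕ).testBit t = true := by
    by_contra! h
    exact hij.not_ge (Nat.le_of_testBit h)
  have htk : t < k := (Nat.pow_lt_pow_iff_right one_lt_two).mp <|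
    (Nat.ge_two_pow_of_testBit htj).trans_lt j.isLt
  exact prod_eq_zero (mem_range.mpr htk) (by rw [if_neg hti, if_pos htj, hM])

theorem kron_apply_self_ne_zero (hdiag : ∀ a, M a a ≠ 0) (k : ℕ) (i : Fin (2 ^ k)) :
    kron M k i i ≠ 0 :=
  prod_ne_zero_iff.mpr fun _ _ => hdiag _

theorem isUnit_det_kron (hM : M 0 1 = 0) (hdiag : ∀ a, M a a ≠ 0) (k : ℕ) :
    IsUnit (kron M k).det := by
  rw [det_of_isLowerTriangular _ (isLowerTriangular_kron hM k), isUnit_iff_ne_zero]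
  exact prod_ne_zero_iff.mpr fun i _ => kron_apply_self_ne_zero hdiag k i

end Kron

theorem isUnit_det_Gk [Field F] {μ δ : F} (hμ : μ ≠ 0) (γ : F) (hδ : δ ≠ 0) (k : ℕ) :
    IsUnit (Gk μ γ δ k).det :=
  isUnit_det_kron (M := G2 μ γ δ) rfl (Fin.forall_fin_two.mpr ⟨hμ, hδ⟩) k

theorem stmt5_general [Field F] (μ γ δ : F) (hμ : μ ≠ 0) (hδ : δ ≠ 0) (k : ℕ)
    (u : Fin (2 ^ k) → F) :
    ∑ j, g0inv μ γ δ k j * codeword μ γ δ k u j = u 0 :=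
  calc ∑ j, g0inv μ γ δ k j * codeword μ γ δ k u j
      = (Gk μ γ δ k)⁻¹.col 0 ⬝ᵥ (u ᵥ* Gk μ γ δ k) := rfl
    _ = (u ᵥ* Gk μ γ δ k) ⬝ᵥ (Gk μ γ δ k)⁻¹.col 0 := dotProduct_comm _ _
    _ = u 0 := vecMul_dotProduct_inv_col (isUnit_det_Gk hμ γ hδ k) u 0

/-- Paper's Theorem 1: in characteristic 2, for an M-SPC node (`u(0) = 0`), the entries of
`diag(g0inv^{(k)})·c` satisfy a single parity-check equation. -/
theorem stmt5 [Field F] [CharP F 2] (μ γ δ : F) (hμ : μ ≠ 0) (hγ : γ ≠ 0) (hδ : δ ≠ 0)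
    (k : ℕ) (u : Fin (2 ^ k) → F) (hu : u 0 = 0) :
    ∑ j, g0inv μ γ δ k j * codeword μ γ δ k u j = 0 :=
  (stmt5_general μ γ δ hμ hδ k u).trans hu
end

section
/- Let k ≥ 1 and suppose u ∈ F^{2^k} satisfies u(i) = 0 for every i < 2^k − 2 (a Type-I node: only the last two positions are information positions). Let c be the associated codeword. Then for every 0 ≤ a < 2^{k−1}: c(2a) = (μ·u(2^k−2) + γ·u(2^k−1))·r^{(k−1)}(a) and c(2a+1) = δ·u(2^k−1)·r^{(k−1)}(a); that is, the even-indexed and odd-indexed entries of c each form a multiplicative repetition pattern along the last row of G2^{⊗(k−1)}. (Paper's Theorem 2.) -/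
open Finset

variable {F : Type*}

/-!
Splitting off the lowest binary digit of each index gives `M^{⊗(m+1)} = M^{⊗m} ⊗ M`. Encoding
therefore first combines each pair `u (2 * i)`, `u (2 * i + 1)` through the kernel `M`, separately
for even and odd output positions, and then applies `M^{⊗m}` to each of the two combined vectors.
When only the last pair is nonzero, each combined vector is supported at its last position and is
encoded as a multiple of the last row of `M^{⊗m}`.
-/

/-- The index `2 * a + b` with binary digits those of `a` followed by a new lowest digit `b`. -/
def appendBit {m : ℕ} : Fin (2 ^ m) × Fin 2 ≃ Fin (2 ^ (m + 1)) :=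
  finProdFinEquiv.trans (finCongr (pow_succ 2 m).symm)

section AppendBit

variable {m : ℕ}

theorem val_appendBit (a : Fin (2 ^ m)) (b : Fin 2) :
    (appendBit (a, b) : ℕ) = 2 * a + b :=
  Nat.add_comm _ _

theorem testBit_zero_appendBit (a : Fin (2 ^ m)) (b : Fin 2) :
    (appendBit (a, b) : ℕ).testBit 0 = decide (b = 1) := by
  rw [val_appendBit, Nat.testBit_zero]
  fin_cases b <;> simp

theorem testBit_succ_appendBit (a : Fin (2 ^ m)) (b : Fin 2) (t : ℕ) :
    (appendBit (a, b) : ℕ).testBit (t + 1) = (a : ℕ).testBit t := by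
  have half : (2 * (a : ℕ) + b) / 2 = a := by omega
  rw [val_appendBit, Nat.testBit_succ, half]

end AppendBit

section KroneckerPower

open Matrix

variable [Field F] (M : Matrix (Fin 2) (Fin 2) F) {m : ℕ}

theorem kron_succ_appendBit (i j : Fin (2 ^ m)) (b c : Fin 2) :
    kron M (m + 1) (appendBit (i, b)) (appendBit (j, c)) = kron M m i j * M b c := by
  have ite_eq_self (d : Fin 2) : (if d = 1 then 1 else 0) = d := by fin_cases d <;> rfl
  simp only [kron, prod_range_succ', testBit_zero_appendBit, testBit_succ_appendBit,
    decide_eq_true_eq, ite_eq_self]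

theorem vecMul_kron_succ_appendBit (u : Fin (2 ^ (m + 1)) → F) (a : Fin (2 ^ m)) (c : Fin 2) :
    (u ᵥ* kron M (m + 1)) (appendBit (a, c)) =
      ((fun i => ∑ b, u (appendBit (i, b)) * M b c) ᵥ* kron M m) a := by
  simp only [vecMul, dotProduct, ← appendBit.sum_comp, Fintype.sum_prod_type,
    kron_succ_appendBit, sum_mul]
  exact sum_congr rfl fun i _ => sum_congr rfl fun b _ => by ring

theorem vecMul_kron_succ_of_support_pair {u : Fin (2 ^ (m + 1)) → F} {l : Fin (2 ^ m)}
    (hu : ∀ i ≠ l, ∀ b, u (appendBit (i, b)) = 0) (a : Fin (2 ^ m)) (c : Fin 2) :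
    (u ᵥ* kron M (m + 1)) (appendBit (a, c)) =
      (u (appendBit (l, 0)) * M 0 c + u (appendBit (l, 1)) * M 1 c) * kron M m l a := by
  rw [vecMul_kron_succ_appendBit, vecMul, dotProduct, Fintype.sum_eq_single l, Fin.sum_univ_two]
  intro i hi
  simp only [hu i hi, zero_mul, sum_const_zero]

theorem stmt6_general {u : Fin (2 ^ (m + 1)) → F}
    (hu : ∀ i : Fin (2 ^ (m + 1)), (i : ℕ) < 2 ^ (m + 1) - 2 → u i = 0)
    (a : Fin (2 ^ m)) (c : Fin 2) :
    (u ᵥ* kron M (m + 1)) ⟨2 * a + c, index_lt a.isLt c.isLt (pow_succ' 2 m).symm⟩ =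
      (u ⟨2 ^ (m + 1) - 2, Nat.sub_lt (Nat.two_pow_pos _) two_pos⟩ * M 0 c
        + u ⟨2 ^ (m + 1) - 1, Nat.sub_lt (Nat.two_pow_pos _) one_pos⟩ * M 1 c)
        * kron M m ⟨2 ^ m - 1, Nat.sub_lt (Nat.two_pow_pos m) one_pos⟩ a := by
  have two_pow_pos := Nat.two_pow_pos m
  let last : Fin (2 ^ m) := ⟨2 ^ m - 1, Nat.sub_lt two_pow_pos one_pos⟩
  have support_last (i : Fin (2 ^ m)) (hi : i ≠ last) (b : Fin 2) : u (appendBit (i, b)) = 0 := by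
    have i_ne : (i : ℕ) ≠ 2 ^ m - 1 := Fin.val_ne_of_ne hi
    apply hu
    rw [val_appendBit]
    omega
  have index_out : appendBit (a, c) = ⟨2 * a + c, index_lt a.isLt c.isLt (pow_succ' 2 m).symm⟩ :=
    Fin.ext (val_appendBit a c)
  have index_penultimate : appendBit (last, 0) =
      ⟨2 ^ (m + 1) - 2, Nat.sub_lt (Nat.two_pow_pos _) two_pos⟩ := by
    simp only [Fin.ext_iff, val_appendBit, last, Fin.val_zero]
    omega
  have index_last : appendBit (last, 1) =
      ⟨2 ^ (m + 1) - 1, Nat.sub_lt (Nat.two_pow_pos _) one_pos⟩ := by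
    simp only [Fin.ext_iff, val_appendBit, last, Fin.val_one]
    omega
  simpa only [index_out, index_penultimate, index_last] using
    vecMul_kron_succ_of_support_pair M support_last a c

end KroneckerPower

/-- Paper's Theorem 2 (Type-I node, with `k = m + 1 ≥ 1`): if only the last two input
positions are nonzero, then the even- and odd-indexed entries of the codeword each form a
multiplicative repetition pattern along the last row of `G2^{⊗(k−1)}`. -/
theorem stmt6 [Field F] (μ γ δ : F) (hμ : μ ≠ 0) (hγ : γ ≠ 0) (hδ : δ ≠ 0) (m : ℕ)
    (u : Fin (2 ^ (m + 1)) → F)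
    (hu : ∀ i : Fin (2 ^ (m + 1)), (i : ℕ) < 2 ^ (m + 1) - 2 → u i = 0)
    (a : Fin (2 ^ m)) :
    codeword μ γ δ (m + 1) u
        ⟨2 * (a : ℕ), by have := pow_succ 2 m; have := a.isLt; omega⟩
      = (μ * u ⟨2 ^ (m + 1) - 2, by have := Nat.two_pow_pos (m + 1); omega⟩
          + γ * u ⟨2 ^ (m + 1) - 1, by have := Nat.two_pow_pos (m + 1); omega⟩)
          * rk μ γ δ m a ∧
    codeword μ γ δ (m + 1) u
        ⟨2 * (a : ℕ) + 1, by have := pow_succ 2 m; have := a.isLt; omega⟩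
      = δ * u ⟨2 ^ (m + 1) - 1, by have := Nat.two_pow_pos (m + 1); omega⟩
          * rk μ γ δ m a := by
  have entry := stmt6_general (G2 μ γ δ) hu a
  exact ⟨(entry 0).trans (by simp [G2, rk, Gk, mul_comm]),
    (entry 1).trans (by simp [G2, rk, Gk, mul_comm])⟩
end

section
/- Let k ≥ 3 and suppose u ∈ F^{2^k} satisfies u(i) = 0 for every i not in {2^k−5, 2^k−3, 2^k−2, 2^k−1} (a Type-V node). Let c be the associated codeword. Define v ∈ F^8 by v(3) = u(2^k−5), v(5) = u(2^k−3), v(6) = u(2^k−2), v(7) = u(2^k−1), and v(m) = 0 otherwise, and let c_r ∈ F^8 be its codeword under G2^{⊗3}, c_r(b) = ∑_{m<8} v(m)·G2^{⊗3}(m,b). Then for all 0 ≤ a < 2^{k−3} and 0 ≤ b < 8: c(8a + b) = r^{(k−3)}(a)·c_r(b). (Paper's Theorem 6.) -/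
open Finset

variable {F : Type*}

/-!
Splitting each index into its high and low binary digits identifies `G2^{⊗(m+n)}` with
`G2^{⊗m} ⊗ₖ G2^{⊗n}`, so the codeword of a pure tensor `w ⊗ v` is the tensor of the codewords of
`w` and `v`. An input supported on its last block of length `2^n` is such a tensor, with `w` the
last unit vector, whose codeword is the last row of `G2^{⊗m}`. A Type-V input is supported on its
last block of length `2^3`.
-/

open scoped Kronecker

/-- The splitting of an `(m + n)`-digit index into its `m` high and `n` low binary digits:
`(x, c)` corresponds to `2 ^ n * x + c`, position `c` of block `x`. -/
def blockEquiv (m n : ℕ) : Fin (2 ^ m) × Fin (2 ^ n) ≃ Fin (2 ^ (m + n)) :=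
  finProdFinEquiv.trans (finCongr (pow_add 2 m n).symm)

/-- The index `2 ^ m - 1`, all of whose `m` binary digits are `1`. -/
def lastIndex (m : ℕ) : Fin (2 ^ m) :=
  ⟨2 ^ m - 1, Nat.sub_lt (Nat.two_pow_pos m) one_pos⟩

theorem val_blockEquiv (m n : ℕ) (p : Fin (2 ^ m) × Fin (2 ^ n)) :
    (blockEquiv m n p : ℕ) = 2 ^ n * p.1 + p.2 :=
  add_comm _ _

theorem testBit_blockEquiv_of_lt {m n t : ℕ} (p : Fin (2 ^ m) × Fin (2 ^ n)) (ht : t < n) :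
    (blockEquiv m n p : ℕ).testBit t = (p.2 : ℕ).testBit t := by
  rw [val_blockEquiv, Nat.testBit_two_pow_mul_add _ p.2.isLt, if_pos ht]

theorem testBit_blockEquiv_add {m n : ℕ} (p : Fin (2 ^ m) × Fin (2 ^ n)) (t : ℕ) :
    (blockEquiv m n p : ℕ).testBit (n + t) = (p.1 : ℕ).testBit t := by
  rw [val_blockEquiv, Nat.testBit_two_pow_mul_add _ p.2.isLt, if_neg (by omega),
    Nat.add_sub_cancel_left]

theorem val_blockEquiv_add_lt_of_ne_lastIndex {m : ℕ} (n : ℕ) {p : Fin (2 ^ m) × Fin (2 ^ n)}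
    (hp : p.1 ≠ lastIndex m) : (blockEquiv m n p : ℕ) + 2 ^ n < 2 ^ (m + n) := by
  have hp_lt : (p.1 : ℕ) + 1 < 2 ^ m := by
    have : (p.1 : ℕ) ≠ 2 ^ m - 1 := Fin.val_ne_of_ne hp
    omega
  calc (blockEquiv m n p : ℕ) + 2 ^ n = 2 ^ n * (p.1 + 1) + p.2 := by rw [val_blockEquiv]; ring
    _ < 2 ^ (m + n) := index_lt hp_lt p.2.isLt (by ring)

theorem val_blockEquiv_lastIndex_add (m n : ℕ) (c : Fin (2 ^ n)) :
    (blockEquiv m n (lastIndex m, c) : ℕ) + 2 ^ n = 2 ^ (m + n) + c := by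
  have h_last : (lastIndex m : ℕ) + 1 = 2 ^ m := Nat.sub_add_cancel Nat.one_le_two_pow
  calc (blockEquiv m n (lastIndex m, c) : ℕ) + 2 ^ n = 2 ^ n * (lastIndex m + 1) + c := by
        rw [val_blockEquiv]; ring
    _ = 2 ^ (m + n) + c := by rw [h_last, pow_add, mul_comm]

section Codeword

variable [Field F]

theorem kron_add_submatrix_blockEquiv (M : Matrix (Fin 2) (Fin 2) F) (m n : ℕ) :
    (kron M (m + n)).submatrix (blockEquiv m n) (blockEquiv m n) = kron M m ⊗ₖ kron M n := by
  ext p q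
  rw [Matrix.submatrix_apply, Matrix.kroneckerMap_apply]
  unfold kron
  rw [congrArg range (add_comm m n), Finset.prod_range_add, mul_comm]
  congr 1 <;> refine Finset.prod_congr rfl fun t ht => ?_
  · simp only [testBit_blockEquiv_add]
  · simp only [testBit_blockEquiv_of_lt _ (Finset.mem_range.mp ht)]

theorem Gk_blockEquiv (μ γ δ : F) (m n : ℕ) (p q : Fin (2 ^ m) × Fin (2 ^ n)) :
    Gk μ γ δ (m + n) (blockEquiv m n p) (blockEquiv m n q) =
      Gk μ γ δ m p.1 q.1 * Gk μ γ δ n p.2 q.2 :=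
  congrFun₂ (kron_add_submatrix_blockEquiv (G2 μ γ δ) m n) p q

theorem codeword_blockEquiv_of_eq_mul (μ γ δ : F) {m n : ℕ} {u : Fin (2 ^ (m + n)) → F}
    {w : Fin (2 ^ m) → F} {v : Fin (2 ^ n) → F}
    (hu : ∀ x c, u (blockEquiv m n (x, c)) = w x * v c) (a : Fin (2 ^ m)) (b : Fin (2 ^ n)) :
    codeword μ γ δ (m + n) u (blockEquiv m n (a, b)) =
      codeword μ γ δ m w a * codeword μ γ δ n v b := by
  unfold codeword
  rw [← (blockEquiv m n).sum_comp, Finset.sum_mul_sum, Fintype.sum_prod_type]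
  refine Fintype.sum_congr _ _ fun x => Fintype.sum_congr _ _ fun c => ?_
  rw [hu, Gk_blockEquiv]
  ring

theorem codeword_single_lastIndex (μ γ δ : F) (m : ℕ) :
    codeword μ γ δ m (Pi.single (lastIndex m) 1) = rk μ γ δ m :=
  Matrix.single_one_vecMul _ _

theorem stmt10_general (μ γ δ : F) (m n : ℕ) (u : Fin (2 ^ (m + n)) → F)
    (hu : ∀ i : Fin (2 ^ (m + n)), (i : ℕ) + 2 ^ n < 2 ^ (m + n) → u i = 0)
    (a : Fin (2 ^ m)) (b : Fin (2 ^ n)) :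
    codeword μ γ δ (m + n) u (blockEquiv m n (a, b)) =
      rk μ γ δ m a * codeword μ γ δ n (fun c => u (blockEquiv m n (lastIndex m, c))) b := by
  rw [← codeword_single_lastIndex]
  refine codeword_blockEquiv_of_eq_mul μ γ δ (fun x c => ?_) a b
  obtain rfl | hx := eq_or_ne x (lastIndex m)
  · rw [Pi.single_eq_same, one_mul]
  · rw [Pi.single_eq_of_ne hx, zero_mul, hu _ (val_blockEquiv_add_lt_of_ne_lastIndex n hx)]

end Codeword

/-- Paper's Theorem 6 (Type-V node, with `k = m + 3 ≥ 3`): if only input positions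
`2^k−5, 2^k−3, 2^k−2, 2^k−1` are nonzero, then `c(8a+b) = r^{(k−3)}(a)·c_r(b)` where `c_r`
is the codeword under `G2^{⊗3}` of the length-8 vector `v` supported on positions 3,5,6,7. -/
theorem stmt10 [Field F] (μ γ δ : F) (hμ : μ ≠ 0) (hγ : γ ≠ 0) (hδ : δ ≠ 0)
    (m : ℕ) (u : Fin (2 ^ (m + 3)) → F)
    (hu : ∀ i : Fin (2 ^ (m + 3)), (i : ℕ) ≠ 2 ^ (m + 3) - 5 → (i : ℕ) ≠ 2 ^ (m + 3) - 3 →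
      (i : ℕ) ≠ 2 ^ (m + 3) - 2 → (i : ℕ) ≠ 2 ^ (m + 3) - 1 → u i = 0)
    (v : Fin (2 ^ 3) → F)
    (hv : ∀ b : Fin (2 ^ 3), v b =
      if (b : ℕ) = 3 then u ⟨2 ^ (m + 3) - 5, by have := Nat.two_pow_pos (m + 3); omega⟩
      else if (b : ℕ) = 5 then u ⟨2 ^ (m + 3) - 3, by have := Nat.two_pow_pos (m + 3); omega⟩
      else if (b : ℕ) = 6 then u ⟨2 ^ (m + 3) - 2, by have := Nat.two_pow_pos (m + 3); omega⟩
      else if (b : ℕ) = 7 then u ⟨2 ^ (m + 3) - 1, by have := Nat.two_pow_pos (m + 3); omega⟩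
      else 0)
    (cr : Fin (2 ^ 3) → F)
    (hcr : ∀ b : Fin (2 ^ 3), cr b = ∑ mm, v mm * Gk μ γ δ 3 mm b)
    (a : Fin (2 ^ m)) (b : Fin (2 ^ 3)) :
    codeword μ γ δ (m + 3) u
        ⟨8 * (a : ℕ) + (b : ℕ), by
          have ha := a.isLt; have hb := b.isLt
          have h8 : (2 : ℕ) ^ 3 = 8 := by norm_num
          have hpq : (2 : ℕ) ^ (m + 3) = 2 ^ m * 8 := by rw [pow_add]; norm_num
          omega⟩
      = rk μ γ δ m a * cr b := by
  have h_support : ∀ i : Fin (2 ^ (m + 3)), (i : ℕ) + 2 ^ 3 < 2 ^ (m + 3) → u i = 0 :=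
    fun i hi => hu i (by lia) (by lia) (by lia) (by lia)
  have h_lastBlock : v = fun c => u (blockEquiv m 3 (lastIndex m, c)) := by
    funext c
    have h_val := val_blockEquiv_lastIndex_add m 3 c
    rw [hv c]
    split_ifs
    case neg => exact (hu _ (by lia) (by lia) (by lia) (by lia)).symm
    all_goals exact congrArg u (Fin.ext (by lia))
  have h_index : blockEquiv m 3 (a, b) = ⟨8 * a + b, index_lt a.isLt b.isLt (by ring)⟩ :=
    Fin.ext (val_blockEquiv m 3 (a, b))
  rw [hcr, h_lastBlock, ← h_index]
  exact stmt10_general μ γ δ m 3 u h_support a b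
end

section
/- Let 0 ≤ s' ≤ k and suppose u ∈ F^{2^k} satisfies u(i) = 0 for every i < 2^k − 2^{s'} (a GM-REP node: all descendants are frozen except the rightmost length-2^{s'} source node). Let c be the associated codeword, and let c' ∈ F^{2^{s'}} be the codeword of the last 2^{s'} entries of u under G2^{⊗s'}, i.e., c'(b) = ∑_{m<2^{s'}} u(2^k − 2^{s'} + m)·G2^{⊗s'}(m,b). Then for all 0 ≤ a < 2^{k−s'} and 0 ≤ b < 2^{s'}: c(2^{s'}·a + b) = r^{(k−s')}(a)·c'(b). (Paper's Theorem 7.) -/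
open Finset

variable {F : Type*}

/-!
Splitting a `k`-digit index into its high `k - s` and low `s` binary digits identifies `M^{⊗k}`
with `M^{⊗(k-s)} ⊗ M^{⊗s}`, so the codeword of `u` is a combination of the codewords of its
length-`2^s` blocks, weighted by the entries of `M^{⊗(k-s)}`. When only the last block of `u` is
nonzero, only the last row of `M^{⊗(k-s)}` contributes.
-/

open Matrix Kronecker

section BlockIndex

variable {d s k : ℕ}

/-- The identification of a `k`-digit binary index with the pair of its high `d` digits (the number
of a block of length `2 ^ s`) and its low `s` digits (the position within that block). The equation
`d + s = k` is an argument so that `k - s` can be used for `d` without casts. -/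
def blockIndex (h : d + s = k) : Fin (2 ^ d) × Fin (2 ^ s) ≃ Fin (2 ^ k) :=
  finProdFinEquiv.trans (finCongr (by rw [← pow_add, h]))

theorem blockIndex_val (h : d + s = k) (p : Fin (2 ^ d)) (m : Fin (2 ^ s)) :
    (blockIndex h (p, m) : ℕ) = 2 ^ s * p + m :=
  Nat.add_comm _ _

theorem two_pow_sub_two_pow (h : d + s = k) : 2 ^ k - 2 ^ s = 2 ^ s * (2 ^ d - 1) := by
  rw [← h, Nat.mul_sub_one, pow_add, mul_comm]

theorem blockIndex_lt_of_lt_last (h : d + s = k) {p : Fin (2 ^ d)} (hp : (p : ℕ) < 2 ^ d - 1)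
    (m : Fin (2 ^ s)) : (blockIndex h (p, m) : ℕ) < 2 ^ k - 2 ^ s := by
  rw [blockIndex_val, two_pow_sub_two_pow h]
  exact index_lt hp m.isLt rfl

theorem blockIndex_val_of_eq_last (h : d + s = k) {last : Fin (2 ^ d)}
    (hlast : (last : ℕ) = 2 ^ d - 1) (m : Fin (2 ^ s)) :
    (blockIndex h (last, m) : ℕ) = 2 ^ k - 2 ^ s + m := by
  rw [blockIndex_val, hlast, two_pow_sub_two_pow h]

end BlockIndex

section KroneckerPower

variable [Field F] (M : Matrix (Fin 2) (Fin 2) F) {d s k : ℕ}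

theorem kron_submatrix_blockIndex (h : d + s = k) :
    (kron M k).submatrix (blockIndex h) (blockIndex h) = kron M d ⊗ₖ kron M s := by
  ext ⟨p, m⟩ ⟨a, b⟩
  rw [submatrix_apply, kroneckerMap_apply, mul_comm]
  simp only [kron, blockIndex_val]
  rw [← h, add_comm d s, prod_range_add]
  congr 1 <;> refine prod_congr rfl fun t ht => ?_
  · simp [Nat.testBit_two_pow_mul_add _ m.isLt, Nat.testBit_two_pow_mul_add _ b.isLt,
      mem_range.mp ht]
  · simp [Nat.testBit_two_pow_mul_add _ m.isLt, Nat.testBit_two_pow_mul_add _ b.isLt]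

theorem vecMul_kron_blockIndex (h : d + s = k) (u : Fin (2 ^ k) → F)
    (a : Fin (2 ^ d)) (b : Fin (2 ^ s)) :
    (u ᵥ* kron M k) (blockIndex h (a, b)) =
      ∑ p, kron M d p a * ((fun m => u (blockIndex h (p, m))) ᵥ* kron M s) b := by
  have kron_entry (p m) : kron M k (blockIndex h (p, m)) (blockIndex h (a, b)) =
      kron M d p a * kron M s m b :=
    congr_fun₂ (kron_submatrix_blockIndex M h) (p, m) (a, b)
  simp only [vecMul, dotProduct, mul_sum]
  rw [← (blockIndex h).sum_comp, Fintype.sum_prod_type]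
  simp only [kron_entry, mul_left_comm]

theorem vecMul_kron_blockIndex_of_frozen (h : d + s = k) {u : Fin (2 ^ k) → F}
    (hu : ∀ i : Fin (2 ^ k), (i : ℕ) < 2 ^ k - 2 ^ s → u i = 0)
    {last : Fin (2 ^ d)} (hlast : (last : ℕ) = 2 ^ d - 1) (a : Fin (2 ^ d)) (b : Fin (2 ^ s)) :
    (u ᵥ* kron M k) (blockIndex h (a, b)) =
      kron M d last a * ((fun m => u (blockIndex h (last, m))) ᵥ* kron M s) b := by
  rw [vecMul_kron_blockIndex]
  refine Fintype.sum_eq_single last fun p hp => ?_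
  have hp_lt : (p : ℕ) < 2 ^ d - 1 := by
    have := Fin.val_ne_of_ne hp
    omega
  have block_eq_zero : (fun m => u (blockIndex h (p, m))) = 0 :=
    funext fun m => hu _ (blockIndex_lt_of_lt_last h hp_lt m)
  rw [block_eq_zero, zero_vecMul, Pi.zero_apply, mul_zero]

end KroneckerPower

theorem stmt11_general [Field F] (M : Matrix (Fin 2) (Fin 2) F) (k s' : ℕ) (hs : s' ≤ k)
    (u : Fin (2 ^ k) → F) (hu : ∀ i : Fin (2 ^ k), (i : ℕ) < 2 ^ k - 2 ^ s' → u i = 0)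
    (a : Fin (2 ^ (k - s'))) (b : Fin (2 ^ s')) :
    (u ᵥ* kron M k)
        ⟨2 ^ s' * (a : ℕ) + (b : ℕ),
          index_lt a.isLt b.isLt (by rw [← pow_add, Nat.add_sub_cancel' hs])⟩ =
      kron M (k - s') ⟨2 ^ (k - s') - 1, Nat.sub_one_lt (Nat.two_pow_pos _).ne'⟩ a *
        ∑ m : Fin (2 ^ s'),
          u ⟨2 ^ k - 2 ^ s' + m, by
            have := Nat.pow_le_pow_right two_pos hs
            omega⟩ * kron M s' m b := by
  have h : k - s' + s' = k := Nat.sub_add_cancel hs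
  let last : Fin (2 ^ (k - s')) := ⟨2 ^ (k - s') - 1, Nat.sub_one_lt (Nat.two_pow_pos _).ne'⟩
  convert vecMul_kron_blockIndex_of_frozen M h hu (last := last) rfl a b using 2
  · exact Fin.ext (blockIndex_val h a b).symm
  · refine Fintype.sum_congr _ _ fun m => ?_
    congr 2
    exact Fin.ext (blockIndex_val_of_eq_last h rfl m).symm

/-- Paper's Theorem 7 (GM-REP node): if all input positions below `2^k − 2^{s'}` are frozen,
then `c(2^{s'}·a + b) = r^{(k−s')}(a)·c'(b)`, where `c'` is the codeword of the last
`2^{s'}` inputs under `G2^{⊗s'}` (the source node). -/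
theorem stmt11 [Field F] (μ γ δ : F) (hμ : μ ≠ 0) (hγ : γ ≠ 0) (hδ : δ ≠ 0)
    (k s' : ℕ) (hs : s' ≤ k)
    (u : Fin (2 ^ k) → F) (hu : ∀ i : Fin (2 ^ k), (i : ℕ) < 2 ^ k - 2 ^ s' → u i = 0)
    (c' : Fin (2 ^ s') → F)
    (hc' : ∀ b : Fin (2 ^ s'), c' b = ∑ mm : Fin (2 ^ s'),
      u ⟨2 ^ k - 2 ^ s' + (mm : ℕ), by
          have h1 : (2 : ℕ) ^ s' ≤ 2 ^ k := Nat.pow_le_pow_right (by norm_num) hs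
          have := mm.isLt; omega⟩ * Gk μ γ δ s' mm b)
    (a : Fin (2 ^ (k - s'))) (b : Fin (2 ^ s')) :
    codeword μ γ δ k u
        ⟨2 ^ s' * (a : ℕ) + (b : ℕ),
          index_lt a.isLt b.isLt (by rw [← pow_add]; congr 1; omega)⟩
      = rk μ γ δ (k - s') a * c' b := by
  rw [hc' b]
  exact stmt11_general (G2 μ γ δ) k s' hs u hu a b
end
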